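/- Let γ ∈ ℝ, let W be an M×M doubly stochastic matrix, Q = (1/M)·𝟙𝟙ᵀ, and let U^{[t]} (t ≥ 1) be d×M matrices. Suppose the d×M matrices X^{[t]} satisfy X^{[t]} = X^{[t−1]} W − γ U^{[t]} for all t ≥ 1, and all columns of X^{[0]} are identical. Then for every t ≥ 1, X^{[t]}(I − Q) = −γ ∑_{τ=1}^{t} U^{[τ]} (I − Q) W^{t−τ}. Moreover, if additionally U^{[t]} = ∑_{τ=1}^{t} α^{t−τ} Ḡ^{[τ]} W^{t−τ+1} for d×M matrices Ḡ^{[τ]} and α ∈ ℝ, then X^{[t]}(I − Q) = −γ ∑_{τ=1}^{t} (∑_{τ'=τ}^{t} α^{τ'−τ}) Ḡ^{[τ]} (I − Q) W^{t−τ+1}. -/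

import Mathlib

open scoped BigOperators

/-! Unrolling the recursion gives `X t = X 0 * W ^ t - γ • ∑ U τ * W ^ (t - τ)`. Equal row and
column sums make `W` commute with the averaging matrix `Q`, so multiplying by `1 - Q` turns the
first term into `X 0 * (1 - Q) * W ^ t`, which vanishes because `Q` fixes a matrix with identical
columns. The form in `G` then follows by exchanging the order of summation over
`1 ≤ τ ≤ s ≤ t`. -/

section AveragingMatrix

variable {K m n : Type*} [DivisionRing K] [Fintype n]

variable (K n) in
/-- The matrix `Q = (1/M)·𝟙𝟙ᵀ`, where `M` is the number of elements of `n`: right multiplication by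
it replaces every column by the average of all columns, so that `X * (1 - Q)` is the consensus error
of `X`. -/
def averagingMatrix : Matrix n n K :=
  Matrix.of fun _ _ => (Fintype.card n : K)⁻¹

theorem commute_averagingMatrix_of_row_sum_eq_col_sum {W : Matrix n n K}
    (hW : ∀ i j, ∑ k, W i k = ∑ k, W k j) : Commute (averagingMatrix K n) W := by
  ext i j
  simp only [averagingMatrix, Matrix.mul_apply, Matrix.of_apply]
  rw [← Finset.mul_sum, ← Finset.sum_mul, hW i j]
  exact (Nat.cast_commute _ _).inv_left₀

theorem mul_averagingMatrix_of_columns_eq [CharZero K] {X : Matrix m n K}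
    (hX : ∀ i j j', X i j = X i j') : X * averagingMatrix K n = X := by
  ext i j
  have : Nonempty n := ⟨j⟩
  have hcard : (Fintype.card n : K) ≠ 0 := Nat.cast_ne_zero.mpr Fintype.card_ne_zero
  calc (X * averagingMatrix K n) i j = ∑ _k : n, X i j * (Fintype.card n : K)⁻¹ := by
        simp only [averagingMatrix, Matrix.mul_apply, Matrix.of_apply, hX i _ j]
    _ = X i j := by
        rw [Finset.sum_const, Finset.card_univ, nsmul_eq_mul, (Nat.cast_commute _ _).eq,
          inv_mul_cancel_right₀ hcard]

end AveragingMatrix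

section LinearRecurrence

variable {R m n : Type*} [Ring R] [Fintype n] [DecidableEq n] {γ : R} {P W : Matrix n n R}
  {X U : ℕ → Matrix m n R}

theorem linear_recurrence_eq_mul_pow_sub_smul_sum
    (hX : ∀ t, X (t + 1) = X t * W - γ • U (t + 1)) (t : ℕ) :
    X t = X 0 * W ^ t - γ • ∑ τ ∈ Finset.Icc 1 t, U τ * W ^ (t - τ) := by
  induction t with
  | zero => simp
  | succ t ih =>
    have hsum : (∑ τ ∈ Finset.Icc 1 t, U τ * W ^ (t - τ)) * W =
        ∑ τ ∈ Finset.Icc 1 t, U τ * W ^ (t + 1 - τ) := by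
      rw [Matrix.sum_mul]
      refine Finset.sum_congr rfl fun τ hτ => ?_
      rw [Matrix.mul_assoc, ← pow_succ, Nat.sub_add_comm (Finset.mem_Icc.mp hτ).2]
    calc X (t + 1)
        = (X 0 * W ^ t - γ • ∑ τ ∈ Finset.Icc 1 t, U τ * W ^ (t - τ)) * W - γ • U (t + 1) := by
          rw [hX, ← ih]
      _ = X 0 * W ^ (t + 1) - γ • (∑ τ ∈ Finset.Icc 1 t, U τ * W ^ (t + 1 - τ) + U (t + 1)) := by
          rw [Matrix.sub_mul, Matrix.mul_assoc, ← pow_succ, Matrix.smul_mul, hsum, smul_add,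
            sub_sub]
      _ = X 0 * W ^ (t + 1) - γ • ∑ τ ∈ Finset.Icc 1 (t + 1), U τ * W ^ (t + 1 - τ) := by
          rw [Finset.sum_Icc_succ_top (Nat.le_add_left 1 t), Nat.sub_self, pow_zero,
            Matrix.mul_one]

theorem linear_recurrence_mul_eq_neg_smul_sum (hPW : Commute P W)
    (hX : ∀ t, X (t + 1) = X t * W - γ • U (t + 1)) (hX0 : X 0 * P = 0) (t : ℕ) :
    X t * P = -γ • ∑ τ ∈ Finset.Icc 1 t, U τ * (P * W ^ (t - τ)) := by
  have hinit : X 0 * W ^ t * P = 0 := by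
    rw [Matrix.mul_assoc, ← (hPW.pow_right t).eq, ← Matrix.mul_assoc, hX0, Matrix.zero_mul]
  rw [linear_recurrence_eq_mul_pow_sub_smul_sum hX t, Matrix.sub_mul, hinit, zero_sub,
    Matrix.smul_mul, Matrix.sum_mul, neg_smul]
  simp only [Matrix.mul_assoc, (hPW.pow_right _).eq]

end LinearRecurrence

theorem sum_momentum_mul_eq_sum_geom_smul {R m n : Type*} [Semiring R] [Fintype n] [DecidableEq n]
    {α : R} {P W : Matrix n n R} {U G : ℕ → Matrix m n R} (hPW : Commute P W)
    (hU : ∀ t, 1 ≤ t → U t = ∑ τ ∈ Finset.Icc 1 t, α ^ (t - τ) • (G τ * W ^ (t - τ + 1)))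
    (t : ℕ) :
    ∑ τ ∈ Finset.Icc 1 t, U τ * (P * W ^ (t - τ)) =
      ∑ τ ∈ Finset.Icc 1 t, (∑ τ' ∈ Finset.Icc τ t, α ^ (τ' - τ)) •
        (G τ * (P * W ^ (t - τ + 1))) := by
  have hterm : ∀ τ' ∈ Finset.Icc 1 t, U τ' * (P * W ^ (t - τ')) =
      ∑ τ ∈ Finset.Icc 1 τ', α ^ (τ' - τ) • (G τ * (P * W ^ (t - τ + 1))) := by
    intro τ' hτ'
    obtain ⟨one_le, le_t⟩ := Finset.mem_Icc.mp hτ'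
    rw [hU τ' one_le, Matrix.sum_mul]
    refine Finset.sum_congr rfl fun τ hτ => ?_
    have hexp : τ' - τ + 1 + (t - τ') = t - τ + 1 := by
      have := (Finset.mem_Icc.mp hτ).2
      omega
    rw [Matrix.smul_mul, Matrix.mul_assoc, (hPW.pow_right _).symm.left_comm, ← pow_add, hexp]
  simp only [Finset.sum_smul]
  rw [Finset.sum_congr rfl hterm]
  refine Finset.sum_comm' fun τ' τ => ?_
  simp only [Finset.mem_Icc]
  omega

theorem pdsl_consensus_error_representation_general {K m n : Type*} [DivisionRing K] [CharZero K]
    [Fintype n] [DecidableEq n] {γ α : K} {W : Matrix n n K}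
    (hW : ∀ i j, ∑ k, W i k = ∑ k, W k j) {U X G : ℕ → Matrix m n K}
    (hX : ∀ t, X (t + 1) = X t * W - γ • U (t + 1)) (hX0 : ∀ i j j', X 0 i j = X 0 i j') :
    (∀ t, X t * (1 - averagingMatrix K n) =
      -γ • ∑ τ ∈ Finset.Icc 1 t, U τ * ((1 - averagingMatrix K n) * W ^ (t - τ))) ∧
    ((∀ t, 1 ≤ t → U t = ∑ τ ∈ Finset.Icc 1 t, α ^ (t - τ) • (G τ * W ^ (t - τ + 1))) →
      ∀ t, X t * (1 - averagingMatrix K n) =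
        -γ • ∑ τ ∈ Finset.Icc 1 t, (∑ τ' ∈ Finset.Icc τ t, α ^ (τ' - τ)) •
          (G τ * ((1 - averagingMatrix K n) * W ^ (t - τ + 1)))) := by
  have hcomm : Commute (1 - averagingMatrix K n) W :=
    (Commute.one_left W).sub_left (commute_averagingMatrix_of_row_sum_eq_col_sum hW)
  have hinit : X 0 * (1 - averagingMatrix K n) = 0 := by
    rw [Matrix.mul_sub, Matrix.mul_one, mul_averagingMatrix_of_columns_eq hX0, sub_self]
  have herror := linear_recurrence_mul_eq_neg_smul_sum hcomm hX hinit
  exact ⟨herror, fun hU t => by rw [herror, sum_momentum_mul_eq_sum_geom_smul hcomm hU]⟩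

/-- Representation of the consensus error in the proof of Lemma 6 of the paper:
for `X^{[t]} = X^{[t−1]} W − γ U^{[t]}` with identical initial columns and
`Q = (1/M)·𝟙𝟙ᵀ`, one has
`X^{[t]}(I − Q) = −γ ∑_{τ=1}^t U^{[τ]} (I − Q) W^{t−τ}`, and, if moreover
`U^{[t]} = ∑_{τ=1}^t α^{t−τ} Ḡ^{[τ]} W^{t−τ+1}`, then
`X^{[t]}(I − Q) = −γ ∑_{τ=1}^t (∑_{τ'=τ}^t α^{τ'−τ}) Ḡ^{[τ]} (I − Q) W^{t−τ+1}`. -/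
theorem pdsl_consensus_error_representation {d M : ℕ} (γ α : ℝ)
    (W : Matrix (Fin M) (Fin M) ℝ)
    (hnonneg : ∀ i j, 0 ≤ W i j)
    (hrow : ∀ i, ∑ j, W i j = 1)
    (hcol : ∀ j, ∑ i, W i j = 1)
    (U X G : ℕ → Matrix (Fin d) (Fin M) ℝ)
    (hX : ∀ t, 1 ≤ t → X t = X (t - 1) * W - γ • U t)
    (hX0 : ∀ i j j', X 0 i j = X 0 i j') :
    let Q : Matrix (Fin M) (Fin M) ℝ := Matrix.of fun _ _ => (M : ℝ)⁻¹
    (∀ t, 1 ≤ t →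
      X t * (1 - Q) = -γ • ∑ τ ∈ Finset.Icc 1 t, U τ * ((1 - Q) * W ^ (t - τ)))
    ∧ ((∀ t, 1 ≤ t →
          U t = ∑ τ ∈ Finset.Icc 1 t, α ^ (t - τ) • (G τ * W ^ (t - τ + 1))) →
        ∀ t, 1 ≤ t →
          X t * (1 - Q) = -γ • ∑ τ ∈ Finset.Icc 1 t,
            (∑ τ' ∈ Finset.Icc τ t, α ^ (τ' - τ)) •
              (G τ * ((1 - Q) * W ^ (t - τ + 1)))) := by
  have h := pdsl_consensus_error_representation_general (α := α) (G := G)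
    (fun i j => (hrow i).trans (hcol j).symm) (fun t => hX (t + 1) t.succ_pos) hX0
  simp only [averagingMatrix, Fintype.card_fin] at h
  exact ⟨fun t _ => h.1 t, fun hU t _ => h.2 hU t⟩
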